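/- arXiv:2301.07216 — 2 statements merged into one kernel-verified Lean document; each statement's English description precedes it below -/
import Mathlib

section
/- For any two integers 1 < m ≤ n/2, the permutation B'(m,n) = (⌈(n+m)/2⌉) ⊕ I(L(m−1)) ⊕ (1) ⊕ I^m(L(n−m)) ⊕ (⌊m/2⌋+1) of {1,…,n} is cyclic (an n-cycle), and its RSK shape Γ(P(B'(m,n))) consists of m rows of length 2 followed by n−2m rows of length 1, i.e., equals (2^m, 1^{n−2m}). -/
/-!
**Cyclicity.** Starting from position `1`, the permutation jumps to the middle `⌈(n+m)/2⌉` of the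
block `{m+1, …, n}`. On that block it is a reflection of the block, except that the omitted value
`⌈(n+m)/2⌉` displaces the smaller values by one; hence the orbit visits the points alternately
above and below the middle, spiralling outwards until it reaches `n`. From `n` it jumps to the
middle `⌊m/2⌋+1` of the block `{2, …, m}`, spirals outwards there in the same way, reaches `m`, and
returns to `1`. So the orbit of `1` is everything (`bfun_induction`). This also shows that the map
is surjective, hence bijective, without a separate argument.

**Shape.** `B'(m,n)` is a decreasing run `c, …, 1` of length `m`, with `c = ⌈(n+m)/2⌉`, followed
by a decreasing run of length `n - m`. The tableau is computed one row at a time: inserting a word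
into a tableau leaves its first row and sends a word of bumped letters to the remaining rows. If
every letter of the second run exceeds the last letter of the first, the row consists of the two
last letters of the runs, and the bumped word is the same word with both of them deleted
(`insRev_two`). This applies `m - 1` times, since apart from `c` the first run has only letters
`≤ m`, while the second run has only letters `> m` except its last letter `⌊m/2⌋+1`, which is
compared with `1` only. What remains is `c` followed by a decreasing run that starts above `c` and
may go below it; it gives a row of length `2` and bumps a decreasing word (`insRev_last`), whose
tableau is a single column.
-/

/-- RSK row insertion of `x` into a tableau (given as its list of rows). -/
def rsInsert : List (List ℕ) → ℕ → List (List ℕ)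
  | [], x => [[x]]
  | r :: rest, x =>
    match r.findIdx? (fun b => decide (x < b)) with
    | none => (r ++ [x]) :: rest
    | some i => (r.set i x) :: rsInsert rest (r.getD i 0)

/-- The RSK insertion tableau `P(σ)`. -/
def rsTableau (σ : List ℕ) : List (List ℕ) := σ.foldl rsInsert []

/-- The RSK shape `Γ(P(σ))`, as the list of row lengths of `P(σ)`. -/
def rskShape (σ : List ℕ) : List ℕ := (rsTableau σ).map List.length

/-- Entrywise sum of two shapes, missing entries treated as `0`. -/
def shapeAdd (a b : List ℕ) : List ℕ :=
  List.zipWithAll (fun x y => x.getD 0 + y.getD 0) a b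

/-- The sequence `(σ_1, …, σ_n)` (with values in `{1,…,n}`) of a permutation of `Fin n`. -/
def seqOfPerm {n : ℕ} (π : Equiv.Perm (Fin n)) : List ℕ :=
  List.ofFn (fun i => (π i : ℕ) + 1)

/-- The cycle type of a permutation, including fixed points as parts equal to `1`. -/
def fullCycleType {n : ℕ} (π : Equiv.Perm (Fin n)) : Multiset ℕ :=
  π.cycleType + Multiset.replicate (n - π.support.card) 1

/-- `L(n) = (n, n−1, …, ⌈n/2⌉+1, ⌈n/2⌉−1, …, 2, 1)`:
the integers `n,…,1` in decreasing order with `⌈n/2⌉` omitted. -/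
def Lseq (n : ℕ) : List ℕ :=
  ((List.range' 1 n).reverse).filter (fun x => decide (x ≠ (n + 1) / 2))

/-- `w = ⌊n/2⌋ + 2p`, where `p = 1` if `n` is odd and `p = 0` if `n` is even. -/
def wval (n : ℕ) : ℕ := n / 2 + (if n % 2 = 1 then 2 else 0)

/-- `L'(n)`: the integers `n,…,1` in decreasing order with `w` omitted. -/
def L'seq (n : ℕ) : List ℕ :=
  ((List.range' 1 n).reverse).filter (fun x => decide (x ≠ wval n))

/-- `B'(m,n) = (⌈(n+m)/2⌉) ⊕ I(L(m−1)) ⊕ (1) ⊕ I^m(L(n−m)) ⊕ (⌊m/2⌋+1)`. -/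
def B'seq (m n : ℕ) : List ℕ :=
  [(n + m + 1) / 2] ++ (Lseq (m - 1)).map (· + 1) ++ [1] ++ (Lseq (n - m)).map (· + m)
    ++ [m / 2 + 1]

/-! ### Row insertion of a union of two decreasing sequences -/

/-- `insRev l` is the insertion tableau of the word `l` read from right to left. Working with
reversed words turns the decreasing runs of `B'(m,n)` into increasing lists and makes the last
inserted letter the head of the list. -/
def insRev (l : List ℕ) : List (List ℕ) := l.foldr (fun x T => rsInsert T x) []

lemma insRev_cons (x : ℕ) (l : List ℕ) : insRev (x :: l) = rsInsert (insRev l) x := rfl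

lemma rsTableau_eq_insRev (σ : List ℕ) : rsTableau σ = insRev σ.reverse := by
  simp [rsTableau, insRev]

lemma rsInsert_one_lt {a x : ℕ} (T : List (List ℕ)) (h : x < a) :
    rsInsert ([a] :: T) x = [x] :: rsInsert T a := by
  simp [rsInsert, List.findIdx?_cons, h]

lemma rsInsert_one_gt {a x : ℕ} (T : List (List ℕ)) (h : a < x) :
    rsInsert ([a] :: T) x = [a, x] :: T := by
  simp [rsInsert, List.findIdx?_cons, h.not_gt]

lemma rsInsert_two_mid {a b x : ℕ} (T : List (List ℕ)) (h : a < x) (h' : x < b) :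
    rsInsert ([a, b] :: T) x = [a, x] :: rsInsert T b := by
  simp [rsInsert, List.findIdx?_cons, h', h.not_gt]

lemma rsInsert_two_lt {a b x : ℕ} (T : List (List ℕ)) (h : x < a) :
    rsInsert ([a, b] :: T) x = [x, b] :: rsInsert T a := by
  simp [rsInsert, List.findIdx?_cons, h]

lemma insRev_col (x : ℕ) (l : List ℕ) (h : (x :: l).Pairwise (· < ·)) :
    insRev (x :: l) = [x] :: insRev l := by
  induction l generalizing x with
  | nil => rfl
  | cons y l ih =>
    rw [insRev_cons x, ih y h.of_cons,
      rsInsert_one_lt _ (List.rel_of_pairwise_cons h (by simp)), ← insRev_cons y, ih y h.of_cons]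

/-- A decreasing word has a single column as its shape. -/
lemma insRev_col_shape (l : List ℕ) (h : l.Pairwise (· < ·)) :
    (insRev l).map List.length = List.replicate l.length 1 := by
  induction l with
  | nil => rfl
  | cons x l ih => rw [insRev_col x l h]; simp [ih h.of_cons, List.replicate_succ]

/-- The first row created by two decreasing runs, the letters of the second run being larger than
the last letter `a` of the first one: it consists of the last letters of the runs, and what is
bumped to the next row is the same word with these two letters removed. -/
lemma insRev_two (x : ℕ) (d : List ℕ) (a : ℕ) (l : List ℕ)
    (hd : (x :: d).Pairwise (· < ·)) (ha : (a :: l).Pairwise (· < ·)) (hax : a < x) :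
    insRev (x :: d ++ a :: l) = [a, x] :: insRev (d ++ l) := by
  induction d generalizing x with
  | nil =>
    rw [List.cons_append, insRev_cons, List.nil_append, insRev_col a l ha,
      rsInsert_one_gt _ hax, List.nil_append]
  | cons y d ih =>
    have hxy : x < y := by grind
    rw [List.cons_append, insRev_cons, ih y hd.of_cons (hax.trans hxy),
      rsInsert_two_mid _ hax hxy, List.cons_append, insRev_cons]

/-- The row opened by the letter `c`, when the letters coming after it first exceed `c` and then
are smaller than `c`: the first small letter bumps `c` itself, so the bumped word is still
decreasing. -/
lemma insRev_last (x : ℕ) (s : List ℕ) (y : ℕ) (u : List ℕ) (c : ℕ)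
    (hs : (x :: s).Pairwise (· < ·)) (hsc : ∀ z ∈ x :: s, z < c)
    (hu : (y :: u).Pairwise (· < ·)) (hcy : c < y) :
    insRev (x :: s ++ y :: u ++ [c]) = [x, y] :: insRev (s ++ c :: u) := by
  induction s generalizing x with
  | nil =>
    have h := insRev_two y u c [] hu (by simp) hcy
    simp only [List.cons_append, List.nil_append, List.append_nil] at h ⊢
    rw [insRev_cons, h, rsInsert_two_lt _ (hsc x (by simp)), insRev_cons]
  | cons w s ih =>
    have h := ih w hs.of_cons (by grind)
    simp only [List.cons_append] at h ⊢
    rw [insRev_cons, h, rsInsert_two_lt _ (by grind), insRev_cons]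

/-- An increasing list avoiding `c` splits into its letters below and above `c`. -/
lemma exists_split (c : ℕ) (d : List ℕ) (hd : d.Pairwise (· < ·)) (hc : c ∉ d) :
    ∃ s u, d = s ++ u ∧ (∀ z ∈ s, z < c) ∧ ∀ z ∈ u, c < z := by
  induction d with
  | nil => exact ⟨[], [], by simp⟩
  | cons x d ih =>
    rcases lt_trichotomy x c with h | h | h
    · obtain ⟨s, u, h1, h2, h3⟩ := ih hd.of_cons (by grind)
      exact ⟨x :: s, u, by simp [h1], by grind, h3⟩
    · grind
    · exact ⟨[], x :: d, by grind⟩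

/-- A letter `c` followed by a decreasing run that starts above `c` yields one row of length `2`
and rows of length `1` below it. -/
lemma shape_last (d : List ℕ) (c : ℕ) (hd : d.Pairwise (· < ·)) (hc : c ∉ d)
    (hx : ∃ x ∈ d, c < x) :
    (insRev (d ++ [c])).map List.length = 2 :: List.replicate (d.length - 1) 1 := by
  obtain ⟨s, u, rfl, hs, hu⟩ := exists_split c d hd hc
  cases u with
  | nil => grind
  | cons y u =>
    have hp := List.pairwise_append.1 hd
    cases s with
    | nil =>
      have h := insRev_two y u c [] hp.2.1 (by simp) (hu y (by simp))
      rw [List.nil_append, h, List.append_nil, List.map_cons, insRev_col_shape u hp.2.1.of_cons]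
      simp
    | cons x s =>
      rw [insRev_last x s y u c hp.1 hs hp.2.1 (hu y (by simp)), List.map_cons, insRev_col_shape]
      · simp
      · rw [List.pairwise_append]
        refine ⟨hp.1.of_cons, ?_, by grind⟩
        rw [List.pairwise_cons]
        exact ⟨by grind, hp.2.1.of_cons⟩

/-- The shape of the word formed by a decreasing run ending in `c, …, a` (read backwards:
`a ++ [c]`) followed by a decreasing run (backwards: `d`), where all letters of `d` exceed those
of `a` and some letter of `d` exceeds `c`. -/
lemma shape_two (a d : List ℕ) (c : ℕ) (ha : (a ++ [c]).Pairwise (· < ·))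
    (hd : d.Pairwise (· < ·)) (hc : c ∉ d) (hx : ∃ x ∈ d, c < x)
    (had : ∀ p ∈ a, ∀ q ∈ d, p < q) (hlen : a.length + 1 ≤ d.length) :
    (insRev (d ++ (a ++ [c]))).map List.length =
      List.replicate (a.length + 1) 2 ++ List.replicate (d.length - (a.length + 1)) 1 := by
  induction a generalizing d with
  | nil => simpa using shape_last d c hd hc hx
  | cons p a ih =>
    cases d with
    | nil => simp at hlen
    | cons q d =>
      have hex : ∃ x ∈ d, c < x := by
        obtain ⟨x, hx, hcx⟩ := hx
        cases d with
        | nil => simp at hlen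
        | cons y d =>
          rcases List.mem_cons.1 hx with rfl | hx
          · exact ⟨y, by simp, hcx.trans (List.rel_of_pairwise_cons hd (by simp))⟩
          · exact ⟨x, hx, hcx⟩
      rw [List.cons_append (as := a),
        insRev_two q d p (a ++ [c]) hd ha (had p (by simp) q (by simp)),
        List.map_cons, ih d ha.of_cons hd.of_cons (fun h => hc (List.mem_cons_of_mem _ h)) hex
          (fun x hx y hy => had x (List.mem_cons_of_mem _ hx) y (List.mem_cons_of_mem _ hy))
          (by simpa using hlen)]
      simp [List.replicate_succ]

/-! ### The sequences `L(k)` and `B'(m,n)` -/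

lemma Lseq_reverse (k : ℕ) :
    (Lseq k).reverse = (List.range' 1 k).filter (fun x => decide (x ≠ (k + 1) / 2)) := by
  simp [Lseq]

lemma Lseq_reverse_pairwise (k : ℕ) : (Lseq k).reverse.Pairwise (· < ·) := by
  rw [Lseq_reverse]
  exact List.Pairwise.filter _ (List.pairwise_lt_range')

lemma mem_Lseq {k x : ℕ} : x ∈ Lseq k ↔ 1 ≤ x ∧ x ≤ k ∧ x ≠ (k + 1) / 2 := by
  simp [Lseq, List.mem_range'_1]
  omega

/-- `L(k)` consists of two runs of consecutive integers, above and below `⌈k/2⌉`. -/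
lemma Lseq_eq_append (k : ℕ) (hk : 1 ≤ k) :
    Lseq k = (List.range' ((k + 1) / 2 + 1) (k - (k + 1) / 2)).reverse ++
      (List.range' 1 ((k + 1) / 2 - 1)).reverse := by
  set h := (k + 1) / 2 with hh
  have e : List.range' 1 k = List.range' 1 (h - 1) ++ h :: List.range' (h + 1) (k - h) := by
    rw [← List.range'_succ, show k - h + 1 = k - (h - 1) by omega]
    have := List.range'_append_1 (s := 1) (m := h - 1) (n := k - (h - 1))
    rw [show 1 + (h - 1) = h by omega, show h - 1 + (k - (h - 1)) = k by omega] at this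
    exact this.symm
  have e1 : (List.range' 1 (h - 1)).filter (fun x => decide (x ≠ h)) = List.range' 1 (h - 1) := by
    simp [List.filter_eq_self, List.mem_range'_1]
    omega
  have e2 : (List.range' (h + 1) (k - h)).filter (fun x => decide (x ≠ h)) =
      List.range' (h + 1) (k - h) := by
    simp [List.filter_eq_self, List.mem_range'_1]
    omega
  rw [Lseq, ← hh, List.filter_reverse, e, List.filter_append, List.filter_cons, e1, e2]
  simp

lemma Lseq_length (k : ℕ) (hk : 1 ≤ k) : (Lseq k).length = k - 1 := by
  rw [Lseq_eq_append k hk]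
  simp
  omega

lemma Lseq_getElem (k j : ℕ) (hk : 1 ≤ k) (hj : j < (Lseq k).length) :
    (Lseq k)[j] = if (k + 1) / 2 < k - j then k - j else k - j - 1 := by
  have hl := Lseq_length k hk
  simp only [Lseq_eq_append k hk, List.getElem_append, List.getElem_reverse, List.getElem_range',
    List.length_reverse, List.length_range']
  split_ifs <;> omega

lemma shape_B' (m n : ℕ) (hm : 1 < m) (hn : 2 * m ≤ n) :
    rskShape (B'seq m n) = List.replicate m 2 ++ List.replicate (n - 2 * m) 1 := by
  have hrev : (B'seq m n).reverse = (m / 2 + 1) :: ((Lseq (n - m)).map (· + m)).reverse ++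
      1 :: (((Lseq (m - 1)).map (· + 1)).reverse ++ [(n + m + 1) / 2]) := by
    simp [B'seq]
  have hpw (k s : ℕ) : ((Lseq k).map (· + s)).reverse.Pairwise (· < ·) := by
    rw [← List.map_reverse, List.pairwise_map]
    exact (Lseq_reverse_pairwise k).imp (by omega)
  have hpa : (((Lseq (m - 1)).map (· + 1)).reverse ++ [(n + m + 1) / 2]).Pairwise (· < ·) := by
    rw [List.pairwise_append]
    refine ⟨hpw _ _, by simp, ?_⟩
    simp [mem_Lseq]
    omega
  rw [rskShape, rsTableau_eq_insRev, hrev, insRev_two, List.map_cons, shape_two]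
  · simp only [List.length_reverse, List.length_map, Lseq_length _ (show 1 ≤ n - m by omega),
      Lseq_length _ (show 1 ≤ m - 1 by omega)]
    obtain ⟨k, rfl⟩ : ∃ k, m = k + 2 := ⟨m - 2, by omega⟩
    simp [List.replicate_succ]
    omega
  · exact hpa
  · exact hpw _ _
  · simp [mem_Lseq]
    omega
  · exact ⟨n, by simp [mem_Lseq]; exact ⟨n - m, by omega⟩, by omega⟩
  · simp [mem_Lseq]
    omega
  · simp only [List.length_reverse, List.length_map, Lseq_length _ (show 1 ≤ n - m by omega),
      Lseq_length _ (show 1 ≤ m - 1 by omega)]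
    omega
  · rw [List.pairwise_cons]
    refine ⟨?_, hpw _ _⟩
    simp [mem_Lseq]
    omega
  · rw [List.pairwise_cons]
    refine ⟨?_, hpa⟩
    simp [mem_Lseq]
    omega
  · omega

/-! ### Cyclicity -/

/-- The map underlying `B'(m,n)`, with positions and values shifted to start at `0`. -/
def bfun (m n i : ℕ) : ℕ :=
  if i = 0 then (n + m - 1) / 2
  else if i < m - 1 then (if m / 2 < m - i then m - i else m - i - 1)
  else if i = m - 1 then 0
  else if i < n - 1 then (if (n + m + 1) / 2 < n + m - i then n + m - i - 1 else n + m - i - 2)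
  else m / 2

lemma bfun_lt (m n i : ℕ) (hm : 1 < m) (hn : 2 * m ≤ n) : bfun m n i < n := by
  unfold bfun
  split_ifs <;> omega

lemma B'seq_length (m n : ℕ) (hm : 1 < m) (hn : 2 * m ≤ n) : (B'seq m n).length = n := by
  simp only [B'seq, List.length_append, List.length_map, List.length_cons, List.length_nil,
    Lseq_length _ (show 1 ≤ n - m by omega), Lseq_length _ (show 1 ≤ m - 1 by omega)]
  omega

lemma B'seq_getElem (m n i : ℕ) (hm : 1 < m) (hn : 2 * m ≤ n) (hi : i < (B'seq m n).length) :
    (B'seq m n)[i] = bfun m n i + 1 := by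
  have hl := B'seq_length m n hm hn
  simp only [B'seq, List.getElem_append, List.getElem_map, List.length_append, List.length_map,
    List.length_cons, List.length_nil, List.getElem_singleton,
    Lseq_length _ (show 1 ≤ n - m by omega), Lseq_length _ (show 1 ≤ m - 1 by omega),
    Lseq_getElem _ _ (show 1 ≤ n - m by omega), Lseq_getElem _ _ (show 1 ≤ m - 1 by omega)]
  unfold bfun
  split_ifs <;> omega

/-- Induction along the orbit of `0`. The orbit jumps to the middle `(n+m-1)/2` of the
block `{m, …, n-1}`, spirals outwards through that block until it hits `n-1`, jumps to the
middle `m/2` of the block `{1, …, m-1}`, spirals outwards to `m-1` and returns to `0`. -/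
lemma bfun_induction (m n : ℕ) (hm : 1 < m) (hn : 2 * m ≤ n) (P : ℕ → Prop) (h0 : P 0)
    (step : ∀ i < n, P i → P (bfun m n i)) : ∀ i < n, P i := by
  have go : ∀ i j, i < n → bfun m n i = j → P i → P j := fun i j hi hij h => hij ▸ step i hi h
  obtain ⟨c, hc⟩ : ∃ c, c = (n + m - 1) / 2 := ⟨_, rfl⟩
  obtain ⟨e, he⟩ : ∃ e, e = m / 2 := ⟨_, rfl⟩
  have big : ∀ d, (c + d < n → P (c + d)) ∧ (m + d ≤ c → P (c - d)) := by
    intro d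
    induction d with
    | zero =>
      have : P c := go 0 c (by omega) (by simp [bfun, hc]) h0
      simp [this]
    | succ d ih =>
      obtain ⟨ih1, ih2⟩ := ih
      rcases Nat.even_or_odd' (n + m) with ⟨k, hk | hk⟩
      · have hck : c + 1 = k := by omega
        have up : c + (d + 1) < n → P (c + (d + 1)) := fun h =>
          go (c - d) _ (by omega) (by unfold bfun; split_ifs <;> omega) (ih2 (by omega))
        exact ⟨up, fun h =>
          go (c + (d + 1)) _ (by omega) (by unfold bfun; split_ifs <;> first | contradiction | omega)
            (up (by omega))⟩
      · have down : m + (d + 1) ≤ c → P (c - (d + 1)) := fun h =>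
          go (c + d) _ (by omega) (by unfold bfun; split_ifs <;> omega) (ih1 (by omega))
        exact ⟨fun h =>
          go (c - (d + 1)) _ (by omega) (by unfold bfun; split_ifs <;> omega) (down (by omega)),
          down⟩
  have last : P (n - 1) := by
    simpa [show c + (n - 1 - c) = n - 1 by omega] using (big (n - 1 - c)).1 (by omega)
  have small : ∀ d, (e + d < m → P (e + d)) ∧ (1 + d ≤ e → P (e - d)) := by
    intro d
    induction d with
    | zero =>
      have : P e := go (n - 1) e (by omega) (by unfold bfun; split_ifs <;> omega) last
      simp [this]
    | succ d ih =>
      obtain ⟨ih1, ih2⟩ := ih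
      rcases Nat.even_or_odd' m with ⟨k, hk | hk⟩
      · have down : 1 + (d + 1) ≤ e → P (e - (d + 1)) := fun h =>
          go (e + d) _ (by omega) (by unfold bfun; split_ifs <;> omega) (ih1 (by omega))
        exact ⟨fun h =>
          go (e - (d + 1)) _ (by omega) (by unfold bfun; split_ifs <;> omega) (down (by omega)),
          down⟩
      · have hek : e = k := by omega
        have up : e + (d + 1) < m → P (e + (d + 1)) := fun h =>
          go (e - d) _ (by omega) (by unfold bfun; split_ifs <;> omega) (ih2 (by omega))
        exact ⟨up, fun h =>
          go (e + (d + 1)) _ (by omega) (by unfold bfun; split_ifs <;> first | contradiction | omega)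
            (up (by omega))⟩
  intro i hi
  rcases Nat.eq_zero_or_pos i with rfl | h1
  · exact h0
  rcases lt_or_ge i m with h2 | h2
  · rcases le_total e i with h3 | h3
    · simpa [Nat.add_sub_cancel' h3] using (small (i - e)).1 (by omega)
    · simpa [Nat.sub_sub_self h3] using (small (e - i)).2 (by omega)
  · rcases le_total c i with h3 | h3
    · simpa [Nat.add_sub_cancel' h3] using (big (i - c)).1 (by omega)
    · simpa [Nat.sub_sub_self h3] using (big (c - i)).2 (by omega)

lemma cyclic_B' (m n : ℕ) (hm : 1 < m) (hn : 2 * m ≤ n) :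
    ∃ π : Equiv.Perm (Fin n), seqOfPerm π = B'seq m n ∧ fullCycleType π = {n} := by
  let f : Fin n → Fin n := fun i => ⟨bfun m n i, bfun_lt m n i hm hn⟩
  -- Every point lies on the orbit of `0`, so every point is a value of `f`.
  have hsurj : Function.Surjective f := by
    have key := bfun_induction m n hm hn (fun x => ∃ y : Fin n, (f y : ℕ) = x)
      ⟨⟨m - 1, by omega⟩, by simp [f, bfun]; omega⟩ (fun i hi _ => ⟨⟨i, hi⟩, rfl⟩)
    intro x
    obtain ⟨y, hy⟩ := key x x.2
    exact ⟨y, Fin.ext hy⟩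
  let π : Equiv.Perm (Fin n) := Equiv.ofBijective f (Finite.surjective_iff_bijective.1 hsurj)
  have hπ (i : Fin n) : (π i : ℕ) = bfun m n i := rfl
  let z : Fin n := ⟨0, by omega⟩
  have hsame : ∀ x, π.SameCycle z x := by
    have key := bfun_induction m n hm hn (fun x => ∃ h : x < n, π.SameCycle z ⟨x, h⟩)
      ⟨by omega, Equiv.Perm.SameCycle.refl _ _⟩
      (fun i _ ⟨h, hi⟩ => ⟨bfun_lt m n i hm hn, (Equiv.Perm.sameCycle_apply_right (f := π)).2 hi⟩)
    intro x
    exact (key x x.2).2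
  have hz : π z ≠ z := by
    intro h
    have := congrArg Fin.val h
    simp [hπ, z, bfun] at this
    omega
  have hcyc : π.IsCycle := ⟨z, hz, fun y _ => hsame y⟩
  have hsupp : π.support = Finset.univ := by
    ext x
    simp only [Equiv.Perm.mem_support, Finset.mem_univ, iff_true]
    exact fun h => hz ((hsame x).apply_eq_self_iff.2 h)
  refine ⟨π, ?_, ?_⟩
  · apply List.ext_getElem
    · simp [seqOfPerm, B'seq_length m n hm hn]
    · intro i h1 h2
      rw [B'seq_getElem m n i hm hn h2]
      simp [seqOfPerm, hπ]
  · simp [fullCycleType, hcyc.cycleType, hsupp]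

/-- for `1 < m ≤ n/2`, `B'(m,n)` is a cyclic permutation (an `n`-cycle)
and its RSK shape is `(2^m, 1^{n−2m})`. -/
theorem stmt_6 (m n : ℕ) (hm : 1 < m) (hn : 2 * m ≤ n) :
    (∃ π : Equiv.Perm (Fin n), seqOfPerm π = B'seq m n ∧ fullCycleType π = {n}) ∧
    rskShape (B'seq m n) = List.replicate m 2 ++ List.replicate (n - 2 * m) 1 :=
  ⟨cyclic_B' m n hm hn, shape_B' m n hm hn⟩
end

section
/- For every integer n > 1 with n ≠ 3, the permutation D'(n) = (w) ⊕ L'(n) of {1,…,n} (where w = ⌊n/2⌋ + 2p, with p = 1 if n is odd and p = 0 if n is even) is almost cyclic (its cycle type is (n−1,1)), and its RSK shape is Γ(P(D'(n))) = (2, 1, 1, …, 1), i.e., one row of length 2 followed by n−2 rows of length 1. -/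
/-- `D'(n) = (w) ⊕ L'(n)`. -/
def D'seq (n : ℕ) : List ℕ := wval n :: L'seq n

/-- The one-column tableau with entries `c`, from top to bottom. -/
def column (c : List ℕ) : List (List ℕ) := c.map (fun y => [y])

/-- Inserting an entry smaller than a whole increasing column pushes the column down by one. -/
lemma rsInsert_column (c : List ℕ) : ∀ x : ℕ, (x :: c).Pairwise (· < ·) →
    rsInsert (column c) x = column (x :: c) := by
  induction c with
  | nil => intro x _; rfl
  | cons y c ih =>
    intro x h
    have hxy : x < y := by simp at h; exact h.1.1
    have := ih y (List.pairwise_cons.1 h).2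
    simp only [column, List.map_cons] at this ⊢
    simp [rsInsert, List.findIdx?_cons, hxy, this]

/-- Inserting a decreasing sequence of entries lying between the two elements `a < b` of the first
row: each one replaces the second element, which moves to the top of the column. -/
lemma foldl_above (a : ℕ) (l : List ℕ) : ∀ (b : ℕ) (c : List ℕ), (∀ x ∈ l, a < x) → a < b →
    (b :: l).Pairwise (· > ·) → (b :: c).Pairwise (· < ·) →
    ∃ b' c', l.foldl rsInsert ([a, b] :: column c) = [a, b'] :: column c' ∧
      c'.length = l.length + c.length ∧ a < b' ∧ (b' :: c').Pairwise (· < ·) := by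
  induction l with
  | nil => intro b c _ hab _ hc; exact ⟨b, c, rfl, by simp, hab, hc⟩
  | cons x l ih =>
    intro b c hl hab hd hc
    have hax : a < x := hl x (by simp)
    have hxb : x < b := (List.pairwise_cons.1 hd).1 x (by simp)
    have hc' : (x :: b :: c).Pairwise (· < ·) := by
      refine List.pairwise_cons.2 ⟨?_, hc⟩
      intro y hy
      rcases List.mem_cons.1 hy with rfl | hy
      · exact hxb
      · exact hxb.trans ((List.pairwise_cons.1 hc).1 y hy)
    obtain ⟨b', c', h1, h2, h3, h4⟩ := ih x (b :: c) (fun y hy => hl y (by simp [hy])) hax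
      (List.pairwise_cons.1 hd).2 hc'
    refine ⟨b', c', ?_, by simp at h2 ⊢; omega, h3, h4⟩
    rw [← h1, List.foldl_cons]
    simp [rsInsert, List.findIdx?_cons, hxb, not_lt.2 hax.le, rsInsert_column c b hc]

/-- Inserting a decreasing sequence of entries below the first element `a` of the first row: each
one replaces that element, which moves to the top of the column. Here the column need only be
larger than `a`, since its top entry may be smaller than `b`. -/
lemma foldl_below (b : ℕ) (l : List ℕ) : ∀ (a : ℕ) (c : List ℕ),
    (a :: l).Pairwise (· > ·) → (a :: c).Pairwise (· < ·) →
    ∃ a' c', l.foldl rsInsert ([a, b] :: column c) = [a', b] :: column c' ∧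
      c'.length = l.length + c.length := by
  induction l with
  | nil => intro a c _ _; exact ⟨a, c, rfl, by simp⟩
  | cons x l ih =>
    intro a c hd hc
    have hxa : x < a := (List.pairwise_cons.1 hd).1 x (by simp)
    have hc' : (x :: a :: c).Pairwise (· < ·) := by
      refine List.pairwise_cons.2 ⟨?_, hc⟩
      intro y hy
      rcases List.mem_cons.1 hy with rfl | hy
      · exact hxa
      · exact hxa.trans ((List.pairwise_cons.1 hc).1 y hy)
    obtain ⟨a', c', h1, h2⟩ := ih x (a :: c) (List.pairwise_cons.1 hd).2 hc'
    refine ⟨a', c', ?_, by simp at h2 ⊢; omega⟩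
    rw [← h1, List.foldl_cons]
    simp [rsInsert, List.findIdx?_cons, hxa, rsInsert_column c a hc]

lemma L'seq_eq (n : ℕ) (h1 : 1 ≤ wval n) (h2 : wval n ≤ n) :
    L'seq n = (List.range' (wval n + 1) (n - wval n)).reverse ++
      (List.range' 1 (wval n - 1)).reverse := by
  unfold L'seq
  generalize wval n = w at *
  have hsplit : List.range' 1 n = List.range' 1 (w - 1) ++ (w :: List.range' (w + 1) (n - w)) := by
    rw [← List.range'_succ, show w = 1 + 1 * (w - 1) by omega]
    simp only [one_mul]
    rw [show 1 + (w - 1) - 1 = w - 1 by omega]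
    conv_rhs => rw [show List.range' (1 + (w - 1)) (n - (1 + (w - 1)) + 1)
      = List.range' (1 + 1 * (w - 1)) (n - (1 + (w - 1)) + 1) by rw [one_mul]]
    rw [List.range'_append]
    congr 1; omega
  rw [hsplit]
  simp only [List.reverse_append, List.reverse_cons, List.filter_append, List.append_assoc]
  have e1 : (List.range' (w + 1) (n - w)).reverse.filter (fun x => decide (x ≠ w)) =
      (List.range' (w + 1) (n - w)).reverse := by
    rw [List.filter_eq_self]; intro x hx; simp at hx; simp; omega
  have e2 : (List.range' 1 (w - 1)).reverse.filter (fun x => decide (x ≠ w)) =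
      (List.range' 1 (w - 1)).reverse := by
    rw [List.filter_eq_self]; intro x hx; simp at hx; simp; omega
  rw [e1, e2]; simp

lemma shape_D' (n : ℕ) (h1 : 1 ≤ wval n) (h2 : wval n < n) :
    rskShape (D'seq n) = 2 :: List.replicate (n - 2) 1 := by
  unfold rskShape rsTableau D'seq
  rw [L'seq_eq n h1 h2.le]
  generalize wval n = w at *
  obtain ⟨k, rfl⟩ : ∃ k, n = w + (k + 1) := ⟨n - w - 1, by omega⟩
  rw [show w + (k + 1) - w = k + 1 by omega, List.range'_concat]
  simp only [List.reverse_append, List.reverse_cons, List.reverse_nil, List.nil_append,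
    List.cons_append, List.foldl_cons, List.foldl_append, one_mul]
  have start : rsInsert (rsInsert [] w) (w + 1 + k) = [w, w + 1 + k] :: column [] := by
    simp [rsInsert, List.findIdx?_cons, column, show ¬ (w + 1 + k < w) by omega]
  have hs : ∀ s j : ℕ, (List.range' s j).reverse.Pairwise (· > ·) := by
    intro s j
    rw [List.pairwise_reverse]
    exact List.pairwise_lt_range'
  rw [start]
  obtain ⟨b, c, e1, e2, e3, e4⟩ := foldl_above w (List.range' (w + 1) k).reverse (w + 1 + k) []
    (by intro x hx; simp at hx; omega) (by omega)
    (List.pairwise_cons.2 ⟨by intro x hx; simp at hx; omega, hs _ _⟩) (by simp)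
  obtain ⟨a', c', f1, f2⟩ := foldl_below b (List.range' 1 (w - 1)).reverse w c
    (List.pairwise_cons.2 ⟨by intro x hx; simp at hx; omega, hs _ _⟩)
    (List.pairwise_cons.2
      ⟨fun y hy => e3.trans ((List.pairwise_cons.1 e4).1 y hy), (List.pairwise_cons.1 e4).2⟩)
  rw [e1, f1]
  simp only [column, List.map_cons, List.map_map, List.length_cons, List.length_nil]
  congr 1
  rw [List.eq_replicate_iff]
  refine ⟨?_, by simp⟩
  simp at e2 f2 ⊢
  omega

/-- The permutation `D'(n)` as a function, with indices and values both shifted down by one. -/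
def dFun (n i : ℕ) : ℕ :=
  if i = 0 then wval n - 1 else if i ≤ n - wval n then n - i else n - 1 - i

lemma dFun_lt (n i : ℕ) (h2 : wval n ≤ n) (hi : i < n) : dFun n i < n := by
  unfold dFun; split_ifs <;> omega

lemma dFun_inj (n i j : ℕ) (h1 : 1 ≤ wval n) (h2 : wval n ≤ n) (hi : i < n) (hj : j < n)
    (h : dFun n i = dFun n j) : i = j := by
  unfold dFun at h; split_ifs at h <;> omega

lemma exists_perm (n : ℕ) (h1 : 1 ≤ wval n) (h2 : wval n ≤ n) :
    ∃ π : Equiv.Perm (Fin n), ∀ i, (π i : ℕ) = dFun n i := by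
  let f : Fin n → Fin n := fun i => ⟨dFun n i, dFun_lt n i h2 i.2⟩
  have hf : Function.Injective f := fun i j h =>
    Fin.ext (dFun_inj n i j h1 h2 i.2 j.2 (Fin.mk.inj_iff.1 h))
  exact ⟨Equiv.ofBijective f (Finite.injective_iff_bijective.1 hf), fun i => rfl⟩

lemma seq_eq (n : ℕ) (h1 : 1 ≤ wval n) (h2 : wval n ≤ n) (π : Equiv.Perm (Fin n))
    (hπ : ∀ i, (π i : ℕ) = dFun n i) : seqOfPerm π = D'seq n := by
  unfold seqOfPerm D'seq
  rw [L'seq_eq n h1 h2]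
  apply List.ext_getElem
  · simp; omega
  · intro i hi hi'
    simp only [List.getElem_ofFn, hπ]
    simp only [List.length_ofFn] at hi
    unfold dFun
    rcases i with _ | i
    · simp; omega
    · simp only [List.getElem_cons_succ, List.getElem_append, List.getElem_reverse,
        List.getElem_range', List.length_reverse, List.length_range']
      split_ifs <;> first | contradiction | omega

lemma cycleType_of_four_le (n : ℕ) (hn : 4 ≤ n) (π : Equiv.Perm (Fin n))
    (hπ : ∀ i, (π i : ℕ) = dFun n i) : fullCycleType π = {n - 1, 1} := by
  have hfix : ∀ i : Fin n, π i = i ↔ (i : ℕ) = n / 2 := by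
    intro i
    have := i.2
    rw [Fin.ext_iff, hπ]
    unfold dFun wval
    split_ifs <;> omega
  -- In the indexing from zero, the square of `π` is `k ↦ k - 1` on `1 ≤ k < n / 2`.
  have hlow : ∀ k : ℕ, ∀ hk : k < n / 2, π.SameCycle ⟨0, by omega⟩ ⟨k, by omega⟩ := by
    intro k
    induction k with
    | zero => intro _; exact Equiv.Perm.SameCycle.refl _ _
    | succ k ih =>
      intro hk
      have : π (π ⟨k + 1, by omega⟩) = ⟨k, by omega⟩ := by
        rw [Fin.ext_iff, hπ, hπ]
        unfold dFun wval
        simp only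
        split_ifs <;> first | contradiction | omega
      have h := ih (by omega)
      rw [← this] at h
      simpa using h
  have hcycle : π.IsCycle := by
    refine ⟨⟨0, by omega⟩, ?_, ?_⟩
    · rw [Ne, hfix]; simp only; omega
    · intro y hy
      rw [Ne, hfix] at hy
      have := y.2
      rcases lt_or_gt_of_ne hy with h | h
      · exact hlow y h
      · rw [← Equiv.Perm.sameCycle_apply_right]
        have hlt : (π y : ℕ) < n / 2 := by
          rw [hπ]; unfold dFun wval; split_ifs <;> omega
        exact hlow _ hlt
  have hsupp : π.support = {(⟨n / 2, by omega⟩ : Fin n)}ᶜ := by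
    ext i
    simp [hfix, Fin.ext_iff]
  have hcard : π.support.card = n - 1 := by
    rw [hsupp, Finset.card_compl]; simp
  unfold fullCycleType
  rw [hcycle.cycleType, hcard, show n - (n - 1) = 1 by omega]
  rfl

/-- for `n > 1` with `n ≠ 3`, `D'(n)` is an almost cyclic permutation
(cycle type `(n−1,1)`) of `{1,…,n}` and its RSK shape is `(2, 1^{n−2})`. -/
theorem stmt_15 (n : ℕ) (hn : 1 < n) (hne : n ≠ 3) :
    (∃ π : Equiv.Perm (Fin n), seqOfPerm π = D'seq n ∧
       fullCycleType π = {n - 1, 1}) ∧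
    rskShape (D'seq n) = 2 :: List.replicate (n - 2) 1 := by
  have h1 : 1 ≤ wval n := by unfold wval; split_ifs <;> omega
  have h2 : wval n < n := by unfold wval; split_ifs <;> omega
  refine ⟨?_, shape_D' n h1 h2⟩
  obtain ⟨π, hπ⟩ := exists_perm n h1 h2.le
  refine ⟨π, seq_eq n h1 h2.le π hπ, ?_⟩
  rcases Nat.lt_or_ge n 4 with h | h
  · obtain rfl : n = 2 := by omega
    have : π = 1 := by
      ext i
      rw [hπ]
      fin_cases i <;> rfl
    subst this
    simp [fullCycleType]
  · exact cycleType_of_four_le n h π hπ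
end
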